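/- Let x_1 < x_2 < ⋯ < x_{n+1} be the zeros of P_{n+1}(·; z), assumed to be n+1 distinct real numbers lying in the open interval (0, z), and set β_n = −b_{n+1} + (2n + α + z + 3). Then the zeros satisfy the electrostatic equilibrium equations: for every k with 1 ≤ k ≤ n+1, Σ_{j≠k} 2/(x_j − x_k) − 1/(x_k − z) − 1/x_k + 1/(x_k − β_n) + 1 − α/x_k = 0. -/

import Mathlib

open MeasureTheory intervalIntegral Polynomial

/-!
The functional annihilates `σ p' + τ p` for every `p`, where `σ = X (X - z)` and
`τ = (1 + α) (X - z) + X - σ` (the integrand is then `(σ x^α e^{-x} p)'`). Testing `σ P'_{n+1}` and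
`σ P''_{n+1} + τ P'_{n+1}` against polynomials of degree at most `n` shows that, modulo `P_{n+1}`,
they are `a_{n+1} (X - β_n) P_n` and `a_{n+1} P_n`. At a zero `x` of `P_{n+1}` this gives
`(x - β_n) (σ P'' + τ P') = σ P'`; dividing by `σ P'` and using that `P''/P'` equals
`∑ 2 / (x - x_j)` at a simple zero yields the equilibrium equation.
-/

section Degree

variable {R : Type*} [Semiring R] {p q : R[X]} {d n : ℕ}

lemma natDegree_X_mul_le (p : R[X]) : (X * p).natDegree ≤ p.natDegree + 1 :=
  (natDegree_mul_le_of_le natDegree_X_le le_rfl).trans (add_comm 1 _).le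

lemma natDegree_mul_derivative_le (hp : p.natDegree ≤ d + 1) (hq : q.natDegree ≤ n) :
    (p * derivative q).natDegree ≤ n + d := by
  rcases n with _ | n
  · simp [derivative_of_natDegree_zero (Nat.le_zero.mp hq)]
  · have hq' : (derivative q).natDegree ≤ n :=
      q.natDegree_derivative_le.trans (Nat.sub_le_sub_right hq 1)
    exact (natDegree_mul_le_of_le hp hq').trans (by omega)

lemma coeff_mul_derivative (hp : p.natDegree ≤ d + 1) (hq : q.natDegree ≤ n) :
    (p * derivative q).coeff (n + d) = n * p.coeff (d + 1) * q.coeff n := by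
  rcases n with _ | n
  · simp [derivative_of_natDegree_zero (Nat.le_zero.mp hq)]
  · have hq' : (derivative q).natDegree ≤ n :=
      q.natDegree_derivative_le.trans (Nat.sub_le_sub_right hq 1)
    rw [show n + 1 + d = d + 1 + n by omega, coeff_mul_add_eq_of_natDegree_le hp hq',
      coeff_derivative, ← mul_assoc, ← Nat.cast_succ, ← Nat.cast_comm, ← mul_assoc]

lemma natDegree_mul_derivative_derivative_le (hp : p.natDegree ≤ 2) (hq : q.natDegree ≤ n) :
    (p * derivative (derivative q)).natDegree ≤ n := by
  rcases n with _ | n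
  · simp [derivative_of_natDegree_zero (Nat.le_zero.mp hq)]
  · exact natDegree_mul_derivative_le hp
      (q.natDegree_derivative_le.trans (Nat.sub_le_sub_right hq 1))

end Degree

section OrthogonalSequence

variable {R : Type*} [CommRing R]

/-- `P` is the sequence of monic orthogonal polynomials of the linear functional `ℓ`, which is
quasi-definite: following Chihara, `ℓ (P n ^ 2) ≠ 0` is part of the notion. -/
structure IsMonicOrthogonal (ℓ : R[X] →ₗ[R] R) (P : Sequence R) : Prop where
  monic : ∀ n, (P n).Monic
  apply_mul_eq_zero : ∀ m n, m ≠ n → ℓ (P m * P n) = 0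
  apply_sq_ne_zero : ∀ n, ℓ (P n ^ 2) ≠ 0

namespace IsMonicOrthogonal

variable {ℓ : R[X] →ₗ[R] R} {P : Sequence R} {m n : ℕ} {a b : R} {q r F : R[X]}

lemma coeff_self (hP : IsMonicOrthogonal ℓ P) (n : ℕ) : (P n).coeff n = 1 := by
  nontriviality R
  simpa only [P.natDegree_eq] using (hP.monic n).coeff_natDegree

lemma apply_mul_eq_zero_of_degree_lt (hP : IsMonicOrthogonal ℓ P) (hq : q.degree < m) :
    ℓ (P m * q) = 0 := by
  have hq_span : q ∈ Submodule.span R (P '' Set.Iio m) := by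
    rwa [P.span_degreeLT fun i _ => by simp [(hP.monic i).leadingCoeff], mem_degreeLT]
  have span_le_ker : Submodule.span R (P '' Set.Iio m) ≤ (ℓ ∘ₗ LinearMap.mulLeft R (P m)).ker := by
    rw [Submodule.span_le]
    rintro _ ⟨j, hj, rfl⟩
    exact hP.apply_mul_eq_zero m j (Set.mem_Iio.mp hj).ne'
  exact span_le_ker hq_span

lemma apply_mul_eq_coeff_mul (hP : IsMonicOrthogonal ℓ P) (hq : q.natDegree ≤ m) :
    ℓ (P m * q) = q.coeff m * ℓ (P m ^ 2) := by
  have hdeg : (q - q.coeff m • P m).degree < m := by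
    refine (degree_lt_iff_coeff_zero _ _).mpr fun i hi => ?_
    rcases hi.eq_or_lt with rfl | hi
    · simp [hP.coeff_self]
    · have hPi : (P m).coeff i = 0 := coeff_eq_zero_of_degree_lt (by simpa using hi)
      simp [hPi, coeff_eq_zero_of_natDegree_lt (hq.trans_lt hi)]
  have hzero := hP.apply_mul_eq_zero_of_degree_lt hdeg
  rwa [mul_sub, mul_smul_comm, ← sq, map_sub, map_smul, smul_eq_mul, sub_eq_zero] at hzero

lemma apply_sq_succ (hP : IsMonicOrthogonal ℓ P)
    (hrec : X * P (n + 1) = P (n + 2) + C b * P (n + 1) + C a * P n) :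
    ℓ (P (n + 1) ^ 2) = a * ℓ (P n ^ 2) := by
  have hdeg : (X * P n).natDegree ≤ n + 1 := by
    simpa only [P.natDegree_eq] using natDegree_X_mul_le (P n)
  calc ℓ (P (n + 1) ^ 2) = ℓ (P (n + 1) * (X * P n)) := by
        rw [hP.apply_mul_eq_coeff_mul hdeg, coeff_X_mul, hP.coeff_self, one_mul]
    _ = ℓ (P (n + 2) * P n + b • (P (n + 1) * P n) + a • P n ^ 2) := by
        congr 1
        simp only [smul_eq_C_mul]
        linear_combination P n * hrec
    _ = a * ℓ (P n ^ 2) := by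
        simp [hP.apply_mul_eq_zero (n + 2) n (by omega), hP.apply_mul_eq_zero (n + 1) n (by omega)]

variable [NoZeroDivisors R]

lemma eq_zero_of_forall_apply_mul_eq_zero (hP : IsMonicOrthogonal ℓ P) (hr : r.degree < m)
    (hℓr : ∀ j < m, ℓ (P j * r) = 0) : r = 0 := by
  by_contra hr0
  have hlead := hℓr r.natDegree ((natDegree_lt_iff_degree_lt hr0).mpr hr)
  rw [hP.apply_mul_eq_coeff_mul le_rfl] at hlead
  exact (mul_ne_zero (leadingCoeff_ne_zero.mpr hr0) (hP.apply_sq_ne_zero _)) hlead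

lemma dvd_of_apply_mul_eq (hP : IsMonicOrthogonal ℓ P) (hF : F.natDegree ≤ n + 2)
    (hℓF : ∀ q : R[X], q.natDegree ≤ n →
      ℓ (F * q) = F.coeff (n + 2) * q.coeff n * ℓ (P (n + 1) ^ 2)) :
    P (n + 1) ∣ F := by
  nontriviality R
  have hmonic := hP.monic (n + 1)
  set r := F %ₘ P (n + 1)
  set w := F /ₘ P (n + 1)
  have hdiv : r + P (n + 1) * w = F := modByMonic_add_div F _
  have hr : r.degree < (n + 1 : ℕ) := by simpa using degree_modByMonic_lt F hmonic
  have hw : w.natDegree ≤ 1 := by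
    rw [natDegree_divByMonic _ hmonic, P.natDegree_eq]
    omega
  have hw_coeff : w.coeff 1 = F.coeff (n + 2) := by
    rw [← hdiv, coeff_add, coeff_eq_zero_of_degree_lt (hr.trans (by norm_cast; omega)), zero_add,
      show n + 2 = n + 1 + 1 from rfl, coeff_mul_add_eq_of_natDegree_le (P.natDegree_eq _).le hw,
      hP.coeff_self, one_mul]
  refine (modByMonic_eq_zero_iff_dvd hmonic).mp
    (hP.eq_zero_of_forall_apply_mul_eq_zero hr fun j hj => ?_)
  have hPj : (P j).natDegree ≤ n := by rw [P.natDegree_eq]; omega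
  have hwPj : ℓ (P (n + 1) * (w * P j)) = F.coeff (n + 2) * (P j).coeff n * ℓ (P (n + 1) ^ 2) := by
    rw [hP.apply_mul_eq_coeff_mul ((natDegree_mul_le_of_le hw hPj).trans (add_comm 1 n).le),
      add_comm n 1, coeff_mul_add_eq_of_natDegree_le hw hPj, hw_coeff, add_comm 1 n]
  calc ℓ (P j * r) = ℓ (F * P j) - ℓ (P (n + 1) * (w * P j)) := by
        rw [← map_sub, ← hdiv]
        ring_nf
    _ = 0 := by rw [hℓF _ hPj, hwPj, sub_self]

end IsMonicOrthogonal

end OrthogonalSequence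

section Pearson

variable {R : Type*} [CommRing R] {ℓ : R[X] →ₗ[R] R} {σ τ : R[X]}

/-- The distributional Pearson equation `(σ ℓ)' = τ ℓ` of a semiclassical functional, where
`⟨(σ ℓ)', p⟩ = -⟨ℓ, σ p'⟩`. -/
def SatisfiesPearson (ℓ : R[X] →ₗ[R] R) (σ τ : R[X]) : Prop :=
  ∀ p, ℓ (σ * derivative p + τ * p) = 0

/-- The second-order operator `p ↦ σ p'' + τ p'`, symmetric with respect to any functional
satisfying the Pearson equation for `σ` and `τ`. -/
noncomputable def pearsonOperator (σ τ p : R[X]) : R[X] :=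
  σ * derivative (derivative p) + τ * derivative p

lemma SatisfiesPearson.apply_pearsonOperator_mul (h : SatisfiesPearson ℓ σ τ) (p q : R[X]) :
    ℓ (pearsonOperator σ τ p * q) = -ℓ (σ * derivative p * derivative q) := by
  rw [eq_neg_iff_add_eq_zero, ← map_add, ← h (derivative p * q), pearsonOperator, derivative_mul]
  ring_nf

lemma SatisfiesPearson.apply_pearsonOperator_mul_comm (h : SatisfiesPearson ℓ σ τ) (p q : R[X]) :
    ℓ (pearsonOperator σ τ p * q) = ℓ (p * pearsonOperator σ τ q) := by
  rw [mul_comm p, h.apply_pearsonOperator_mul, h.apply_pearsonOperator_mul, mul_right_comm]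

lemma natDegree_pearsonOperator_le {q : R[X]} {n : ℕ} (hσ : σ.natDegree ≤ 2) (hτ : τ.natDegree ≤ 2)
    (hq : q.natDegree ≤ n) : (pearsonOperator σ τ q).natDegree ≤ n + 1 :=
  natDegree_add_le_of_degree_le ((natDegree_mul_derivative_derivative_le hσ hq).trans n.le_succ)
    (natDegree_mul_derivative_le hτ hq)

lemma coeff_pearsonOperator {q : R[X]} {n : ℕ} (hσ : σ.natDegree ≤ 2) (hτ : τ.natDegree ≤ 2)
    (hq : q.natDegree ≤ n) : (pearsonOperator σ τ q).coeff (n + 1) = n * τ.coeff 2 * q.coeff n := by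
  have hσq : (σ * derivative (derivative q)).coeff (n + 1) = 0 :=
    coeff_eq_zero_of_natDegree_lt (Nat.lt_succ_of_le (natDegree_mul_derivative_derivative_le hσ hq))
  rw [pearsonOperator, coeff_add, hσq, zero_add, coeff_mul_derivative hτ hq]

/-- The linear polynomial `L` with `σ P'_{n+1} ≡ -a_{n+1} L P_n` modulo `P_{n+1}`, where
`b = b_{n+1}`. For the truncated Laguerre functional it is `β_n - X`. -/
noncomputable def structureFactor (σ τ : R[X]) (b : R) (n : ℕ) : R[X] :=
  C (τ.coeff 2) * X + C (τ.coeff 2 * b + τ.coeff 1 + (2 * n + 1) * σ.coeff 2)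

end Pearson

namespace IsMonicOrthogonal

section StructureRelations

variable {R : Type*} [CommRing R] {ℓ : R[X] →ₗ[R] R} {P : Sequence R} {σ τ : R[X]} {n : ℕ}
  {a b : R}

lemma apply_mul_derivative_add_mul (hP : IsMonicOrthogonal ℓ P) (hℓ : SatisfiesPearson ℓ σ τ)
    (hσ : σ.natDegree ≤ 2) (hτ : τ.natDegree ≤ 2)
    (hrec : X * P (n + 1) = P (n + 2) + C b * P (n + 1) + C a * P n) {q : R[X]}
    (hq : q.natDegree ≤ n) :
    ℓ ((σ * derivative (P (n + 1)) + C a * structureFactor σ τ b n * P n) * q) =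
      (n + 1) * σ.coeff 2 * q.coeff n * ℓ (P (n + 1) ^ 2) := by
  have hXq : (X * q).natDegree ≤ n + 1 := (natDegree_X_mul_le q).trans (by omega)
  have hPq : ℓ (P (n + 1) * q) = 0 := hP.apply_mul_eq_zero_of_degree_lt
    (degree_le_natDegree.trans_lt (by norm_cast; omega))
  have hPXq : ℓ (P (n + 2) * (X * q)) = 0 := hP.apply_mul_eq_zero_of_degree_lt
    (degree_le_natDegree.trans_lt (by norm_cast; omega))
  have expansion : (σ * derivative (P (n + 1)) + C a * structureFactor σ τ b n * P n) * q =
      (σ * derivative (P (n + 1) * q) + τ * (P (n + 1) * q)) - P (n + 1) * (σ * derivative q)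
        - τ.coeff 2 • (P (n + 2) * (X * q))
        - (τ.coeff 2 * b + τ.coeff 1) • (P (n + 1) * (X * q))
        - τ.coeff 0 • (P (n + 1) * q)
        + (a * (τ.coeff 2 * b + τ.coeff 1 + (2 * n + 1) * σ.coeff 2)) • (P n * q) := by
    rw [derivative_mul, structureFactor]
    simp only [smul_eq_C_mul]
    simp only [C_add, C_mul]
    linear_combination -C (τ.coeff 2) * X * q * hrec
      - P (n + 1) * q * eq_quadratic_of_degree_le_two (natDegree_le_iff_degree_le.mp hτ)
  rw [expansion]
  rw [map_add, map_sub, map_sub, map_sub, map_sub, hℓ]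
  simp only [map_smul, smul_eq_mul]
  rw [hP.apply_mul_eq_coeff_mul (natDegree_mul_derivative_le hσ hq), coeff_mul_derivative hσ hq,
    hPXq, hP.apply_mul_eq_coeff_mul hXq, coeff_X_mul, hPq, hP.apply_mul_eq_coeff_mul hq]
  linear_combination -(τ.coeff 2 * b + τ.coeff 1 + (2 * n + 1) * σ.coeff 2) * q.coeff n *
    hP.apply_sq_succ hrec

variable [NoZeroDivisors R]

lemma dvd_mul_derivative_add (hP : IsMonicOrthogonal ℓ P) (hℓ : SatisfiesPearson ℓ σ τ)
    (hσ : σ.natDegree ≤ 2) (hτ : τ.natDegree ≤ 2)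
    (hrec : X * P (n + 1) = P (n + 2) + C b * P (n + 1) + C a * P n) :
    P (n + 1) ∣ σ * derivative (P (n + 1)) + C a * structureFactor σ τ b n * P n := by
  have hdeg := (P.natDegree_eq (n + 1)).le
  have hfactor : (C a * structureFactor σ τ b n * P n).natDegree ≤ n + 1 := by
    rw [structureFactor, mul_assoc, add_comm n 1]
    exact (natDegree_C_mul_le _ _).trans
      (natDegree_mul_le_of_le natDegree_linear_le (P.natDegree_eq n).le)
  refine hP.dvd_of_apply_mul_eq (natDegree_add_le_of_degree_le
    (natDegree_mul_derivative_le (d := 1) hσ hdeg) (by omega)) fun q hq => ?_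
  have hcoeff : (σ * derivative (P (n + 1)) + C a * structureFactor σ τ b n * P n).coeff (n + 2) =
      (n + 1) * σ.coeff 2 := by
    rw [coeff_add, coeff_mul_derivative hσ hdeg, hP.coeff_self,
      coeff_eq_zero_of_natDegree_lt (by omega : _ < n + 2)]
    push_cast
    ring
  rw [hP.apply_mul_derivative_add_mul hℓ hσ hτ hrec hq, hcoeff]

lemma dvd_pearsonOperator_add (hP : IsMonicOrthogonal ℓ P) (hℓ : SatisfiesPearson ℓ σ τ)
    (hσ : σ.natDegree ≤ 2) (hτ : τ.natDegree ≤ 2)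
    (hrec : X * P (n + 1) = P (n + 2) + C b * P (n + 1) + C a * P n) :
    P (n + 1) ∣ pearsonOperator σ τ (P (n + 1)) + C (a * τ.coeff 2) * P n := by
  have hdeg := (P.natDegree_eq (n + 1)).le
  have hPn : (C (a * τ.coeff 2) * P n).natDegree ≤ n := by
    simpa using natDegree_C_mul_le (a * τ.coeff 2) (P n)
  refine hP.dvd_of_apply_mul_eq (natDegree_add_le_of_degree_le
    (natDegree_pearsonOperator_le hσ hτ hdeg) (by omega)) fun q hq => ?_
  have hcoeff : (pearsonOperator σ τ (P (n + 1)) + C (a * τ.coeff 2) * P n).coeff (n + 2) =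
      (n + 1) * τ.coeff 2 := by
    rw [coeff_add, coeff_pearsonOperator hσ hτ hdeg, hP.coeff_self,
      coeff_eq_zero_of_natDegree_lt (by omega : _ < n + 2)]
    push_cast
    ring
  calc ℓ ((pearsonOperator σ τ (P (n + 1)) + C (a * τ.coeff 2) * P n) * q)
      = ℓ (P (n + 1) * pearsonOperator σ τ q) + a * τ.coeff 2 * ℓ (P n * q) := by
        rw [add_mul, map_add, hℓ.apply_pearsonOperator_mul_comm, mul_assoc, ← smul_eq_C_mul,
          map_smul, smul_eq_mul]
    _ = n * τ.coeff 2 * q.coeff n * ℓ (P (n + 1) ^ 2)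
          + a * τ.coeff 2 * (q.coeff n * ℓ (P n ^ 2)) := by
        rw [hP.apply_mul_eq_coeff_mul (natDegree_pearsonOperator_le hσ hτ hq),
          coeff_pearsonOperator hσ hτ hq, hP.apply_mul_eq_coeff_mul hq]
    _ = _ := by
        rw [hcoeff]
        linear_combination -τ.coeff 2 * q.coeff n * hP.apply_sq_succ hrec

lemma structureFactor_mul_pearsonOperator_eval (hP : IsMonicOrthogonal ℓ P)
    (hℓ : SatisfiesPearson ℓ σ τ) (hσ : σ.natDegree ≤ 2) (hτ : τ.natDegree ≤ 2)
    (hrec : X * P (n + 1) = P (n + 2) + C b * P (n + 1) + C a * P n) {x : R}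
    (hx : (P (n + 1)).eval x = 0) :
    (structureFactor σ τ b n).eval x * (pearsonOperator σ τ (P (n + 1))).eval x =
      τ.coeff 2 * (σ.eval x * (derivative (P (n + 1))).eval x) := by
  have hfirst := eval_eq_zero_of_dvd_of_eval_eq_zero (hP.dvd_mul_derivative_add hℓ hσ hτ hrec) hx
  have hsecond := eval_eq_zero_of_dvd_of_eval_eq_zero (hP.dvd_pearsonOperator_add hℓ hσ hτ hrec) hx
  simp only [eval_add, eval_mul, eval_C] at hfirst hsecond
  linear_combination (structureFactor σ τ b n).eval x * hsecond - τ.coeff 2 * hfirst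

lemma structureFactor_eval_ne_zero (hP : IsMonicOrthogonal ℓ P)
    (hℓ : SatisfiesPearson ℓ σ τ) (hσ : σ.natDegree ≤ 2) (hτ : τ.natDegree ≤ 2)
    (hrec : X * P (n + 1) = P (n + 2) + C b * P (n + 1) + C a * P n) {x : R}
    (hx : (P (n + 1)).eval x = 0) (hx' : (derivative (P (n + 1))).eval x ≠ 0)
    (hσx : σ.eval x ≠ 0) : (structureFactor σ τ b n).eval x ≠ 0 := by
  have hfirst := eval_eq_zero_of_dvd_of_eval_eq_zero (hP.dvd_mul_derivative_add hℓ hσ hτ hrec) hx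
  intro hL
  simp [hL, hx', hσx] at hfirst

end StructureRelations

end IsMonicOrthogonal

section SimpleZeros

variable {ι K : Type*} [Field K] {s : Finset ι} {x : ι → K} {i : ι}

lemma eval_derivative_nodal_ne_zero (hx : Set.InjOn x s) (hi : i ∈ s) :
    (derivative (Lagrange.nodal s x)).eval (x i) ≠ 0 := by
  classical
  have hweight := Lagrange.nodalWeight_ne_zero hx hi
  rwa [Lagrange.nodalWeight_eq_eval_derivative_nodal hi, ne_eq, inv_eq_zero] at hweight

variable [DecidableEq ι]

lemma eval_derivative_derivative_nodal (hx : Set.InjOn x s) (hi : i ∈ s) :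
    (derivative (derivative (Lagrange.nodal s x))).eval (x i) =
      (derivative (Lagrange.nodal s x)).eval (x i) * ∑ j ∈ s.erase i, 2 / (x i - x j) := by
  set q := Lagrange.nodal (s.erase i) x with hq
  have hq' : (derivative q).eval (x i) = ∑ j ∈ s.erase i, q.eval (x i) / (x i - x j) := by
    rw [hq, Lagrange.derivative_nodal, eval_finsetSum]
    refine Finset.sum_congr rfl fun j hj => ?_
    have hij : x i - x j ≠ 0 := sub_ne_zero.mpr fun h =>
      Finset.ne_of_mem_erase hj (hx (Finset.mem_of_mem_erase hj) hi h.symm)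
    rw [Lagrange.nodal_eq_mul_nodal_erase hj, eval_mul, eval_sub, eval_X, eval_C,
      mul_div_cancel_left₀ _ hij]
  have hq'' : (derivative (derivative (Lagrange.nodal s x))).eval (x i) =
      2 * (derivative q).eval (x i) := by
    rw [Lagrange.nodal_eq_mul_nodal_erase hi]
    simp [q, two_mul]
  rw [hq'', hq', Lagrange.eval_nodal_derivative_eval_node_eq hi, Finset.mul_sum, Finset.mul_sum]
  exact Finset.sum_congr rfl fun j _ => by ring

theorem IsMonicOrthogonal.electrostatic_equilibrium {ℓ : K[X] →ₗ[K] K} {P : Sequence K}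
    (hP : IsMonicOrthogonal ℓ P) {σ τ : K[X]} (hℓ : SatisfiesPearson ℓ σ τ) (hσ : σ.natDegree ≤ 2)
    (hτ : τ.natDegree ≤ 2) {n : ℕ} {a b : K}
    (hrec : X * P (n + 1) = P (n + 2) + C b * P (n + 1) + C a * P n)
    (hzeros : P (n + 1) = Lagrange.nodal s x) (hx : Set.InjOn x s) (hi : i ∈ s)
    (hσx : σ.eval (x i) ≠ 0) :
    ∑ j ∈ s.erase i, 2 / (x j - x i) =
      τ.eval (x i) / σ.eval (x i) - τ.coeff 2 / (structureFactor σ τ b n).eval (x i) := by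
  have hroot : (P (n + 1)).eval (x i) = 0 := hzeros ▸ Lagrange.eval_nodal_at_node hi
  have hP' : (derivative (P (n + 1))).eval (x i) ≠ 0 :=
    hzeros ▸ eval_derivative_nodal_ne_zero hx hi
  have hP'' : (derivative (derivative (P (n + 1)))).eval (x i) =
      (derivative (P (n + 1))).eval (x i) * -∑ j ∈ s.erase i, 2 / (x j - x i) := by
    rw [hzeros, eval_derivative_derivative_nodal hx hi, ← Finset.sum_neg_distrib]
    simp only [← div_neg, neg_sub]
  have hL := hP.structureFactor_eval_ne_zero hℓ hσ hτ hrec hroot hP' hσx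
  have hode := hP.structureFactor_mul_pearsonOperator_eval hℓ hσ hτ hrec hroot
  simp only [pearsonOperator, eval_add, eval_mul, hP''] at hode
  rw [div_sub_div _ _ hσx hL, eq_div_iff (mul_ne_zero hσx hL)]
  apply mul_left_cancel₀ hP'
  linear_combination -hode

end SimpleZeros

section TruncatedLaguerre

variable {α z : ℝ}

lemma intervalIntegrable_eval_mul_rpow_mul_exp_neg (hα : -1 < α) (z : ℝ) (p : ℝ[X]) :
    IntervalIntegrable (fun x => p.eval x * (x ^ α * Real.exp (-x))) volume 0 z :=
  ((intervalIntegrable_rpow' hα).mul_continuousOn (by fun_prop)).continuousOn_mul (by fun_prop)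

/-- The truncated Laguerre functional `ℓ`. The bound on `α` is an argument because additivity needs
the weight to be integrable at `0`. -/
noncomputable def truncatedLaguerre (hα : -1 < α) (z : ℝ) : ℝ[X] →ₗ[ℝ] ℝ where
  toFun p := ∫ x in (0 : ℝ)..z, p.eval x * (x ^ α * Real.exp (-x))
  map_add' p q := by
    simp only [eval_add, add_mul]
    exact integral_add (intervalIntegrable_eval_mul_rpow_mul_exp_neg hα z p)
      (intervalIntegrable_eval_mul_rpow_mul_exp_neg hα z q)
  map_smul' c p := by
    simp only [eval_smul, smul_eq_mul, mul_assoc, intervalIntegral.integral_const_mul,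
      RingHom.id_apply]

lemma truncatedLaguerre_apply (hα : -1 < α) (z : ℝ) (p : ℝ[X]) :
    truncatedLaguerre hα z p = ∫ x in (0 : ℝ)..z, p.eval x * (x ^ α * Real.exp (-x)) := rfl

lemma truncatedLaguerre_sq_pos (hα : -1 < α) (hz : 0 < z) {p : ℝ[X]} (hp : p ≠ 0) :
    0 < truncatedLaguerre hα z (p ^ 2) := by
  have weight_pos : ∀ x ∈ Set.Ioc 0 z, 0 < x ^ α * Real.exp (-x) := fun x hx =>
    mul_pos (Real.rpow_pos_of_pos hx.1 α) (Real.exp_pos _)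
  rw [truncatedLaguerre_apply, integral_pos_iff_support_of_nonneg_ae' ?_
    (intervalIntegrable_eval_mul_rpow_mul_exp_neg hα z _)]
  · have nonroots_subset : Set.Ioc 0 z \ p.rootSet ℝ ⊆
        Function.support (fun x => (p ^ 2).eval x * (x ^ α * Real.exp (-x))) ∩ Set.Ioc 0 z := by
      rintro x ⟨hx, hroot⟩
      have hpx : p.eval x ≠ 0 := fun h => hroot (by simp [mem_rootSet, hp, h])
      exact ⟨mul_ne_zero (by simpa using hpx) (weight_pos x hx).ne', hx⟩
    refine ⟨hz, lt_of_lt_of_le ?_ (measure_mono nonroots_subset)⟩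
    rw [measure_sdiff_null ((rootSet_finite p ℝ).measure_zero _)]
    simpa using hz
  · rw [Set.uIoc_of_le hz.le]
    filter_upwards [ae_restrict_mem measurableSet_Ioc] with x hx
    rw [eval_pow]
    exact mul_nonneg (sq_nonneg _) (weight_pos x hx).le

/-- The Pearson coefficient `σ` of the truncated Laguerre functional; it vanishes at both ends of
`[0, z]`, which removes the boundary terms. -/
noncomputable def laguerreSigma (z : ℝ) : ℝ[X] := X * (X - C z)

/-- The Pearson coefficient `τ` of the truncated Laguerre functional, from
`(σ x^α e^{-x})' = τ x^α e^{-x}`; expanded so that its coefficients can be read off. -/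
noncomputable def laguerreTau (α z : ℝ) : ℝ[X] :=
  C (-1) * X ^ 2 + C (2 + α + z) * X + C (-(z * (1 + α)))

lemma hasDerivAt_laguerre_boundaryTerm {x : ℝ} (hx : 0 < x) (α z : ℝ) (p : ℝ[X]) :
    HasDerivAt (fun x => (x - z) * x ^ (α + 1) * Real.exp (-x) * p.eval x)
      ((laguerreSigma z * derivative p + laguerreTau α z * p).eval x * (x ^ α * Real.exp (-x)))
      x := by
  have hpow : HasDerivAt (fun x : ℝ => x ^ (α + 1)) ((α + 1) * x ^ α) x := by
    simpa using Real.hasDerivAt_rpow_const (x := x) (p := α + 1) (Or.inl hx.ne')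
  have hexp : HasDerivAt (fun x : ℝ => Real.exp (-x)) (-Real.exp (-x)) x := by
    simpa using (hasDerivAt_neg x).exp
  refine (((((hasDerivAt_id x).sub_const z).mul hpow).mul hexp).mul
    (p.hasDerivAt x)).congr_deriv ?_
  simp only [Real.rpow_add_one hx.ne', one_mul, id_eq, Pi.mul_apply, laguerreSigma, laguerreTau,
    eval_add, eval_mul, eval_X, eval_sub, eval_C, eval_pow]
  ring

lemma satisfiesPearson_truncatedLaguerre (hα : -1 < α) (hz : 0 ≤ z) :
    SatisfiesPearson (truncatedLaguerre hα z) (laguerreSigma z) (laguerreTau α z) := by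
  intro p
  have hcont : Continuous fun x : ℝ => x ^ (α + 1) := Real.continuous_rpow_const (by linarith)
  rw [truncatedLaguerre_apply, integral_eq_sub_of_hasDerivAt_of_le hz (by fun_prop)
    (fun x hx => hasDerivAt_laguerre_boundaryTerm hx.1 α z p)
    (intervalIntegrable_eval_mul_rpow_mul_exp_neg hα z _)]
  simp [Real.zero_rpow (by linarith : α + 1 ≠ 0)]

lemma natDegree_laguerreSigma_le (z : ℝ) : (laguerreSigma z).natDegree ≤ 2 := by
  unfold laguerreSigma
  compute_degree

lemma natDegree_laguerreTau_le (α z : ℝ) : (laguerreTau α z).natDegree ≤ 2 := by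
  unfold laguerreTau
  compute_degree

lemma laguerreTau_div_laguerreSigma {x : ℝ} (hx : x ≠ 0) (hxz : x ≠ z) :
    (laguerreTau α z).eval x / (laguerreSigma z).eval x = (1 + α) / x + 1 / (x - z) - 1 := by
  have hxz' : x - z ≠ 0 := sub_ne_zero.mpr hxz
  simp only [laguerreTau, laguerreSigma, eval_add, eval_mul, eval_sub, eval_pow, eval_X, eval_C]
  field_simp
  ring

lemma coeff_two_laguerreTau (α z : ℝ) : (laguerreTau α z).coeff 2 = -1 := by
  simp [laguerreTau, coeff_one]

lemma eval_structureFactor_laguerre (α z b : ℝ) (n : ℕ) (x : ℝ) :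
    (structureFactor (laguerreSigma z) (laguerreTau α z) b n).eval x =
      -(x - (-b + (2 * n + α + z + 3))) := by
  have hσ2 : (laguerreSigma z).coeff 2 = 1 := by
    simp [laguerreSigma]
  have hτ1 : (laguerreTau α z).coeff 1 = 2 + α + z := by
    simp [laguerreTau, coeff_one]
  simp only [structureFactor, hσ2, coeff_two_laguerreTau, hτ1, eval_add, eval_mul, eval_C, eval_X]
  ring

lemma isMonicOrthogonal_truncatedLaguerre (hα : -1 < α) (hz : 0 < z) {P : Sequence ℝ}
    (hmonic : ∀ n, (P n).Monic)
    (horth : ∀ m n, m ≠ n →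
      ∫ x in (0 : ℝ)..z, (P m).eval x * (P n).eval x * x ^ α * Real.exp (-x) = 0) :
    IsMonicOrthogonal (truncatedLaguerre hα z) P where
  monic := hmonic
  apply_mul_eq_zero m n hmn := by
    simpa only [truncatedLaguerre_apply, eval_mul, mul_assoc] using horth m n hmn
  apply_sq_ne_zero n := (truncatedLaguerre_sq_pos hα hz (P.ne_zero n)).ne'

end TruncatedLaguerre

/-- Electrostatic equilibrium equations for the zeros of the truncated Laguerre
polynomial P_{n+1}(·;z). -/
theorem truncated_laguerre_zeros_electrostatic (α z : ℝ) (hα : -1 < α) (hz : 0 < z)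
    (P : ℕ → Polynomial ℝ)
    (hP_monic : ∀ n, (P n).Monic)
    (hP_deg : ∀ n, (P n).natDegree = n)
    (hP_orth : ∀ m n, m ≠ n →
      ∫ x in (0:ℝ)..z, (P m).eval x * (P n).eval x * x ^ α * Real.exp (-x) = 0)
    (a b : ℕ → ℝ)
    (ha0 : a 0 = 0)
    (hrec0 : Polynomial.X * P 0 = P 1 + Polynomial.C (b 0) * P 0)
    (hrec : ∀ n, 1 ≤ n →
      Polynomial.X * P n = P (n + 1) + Polynomial.C (b n) * P n + Polynomial.C (a n) * P (n - 1))
    (n : ℕ) (xs : Fin (n + 1) → ℝ)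
    (hx_mono : StrictMono xs)
    (hx_mem : ∀ k, xs k ∈ Set.Ioo (0 : ℝ) z)
    (hx_zeros : P (n + 1) = ∏ k, (Polynomial.X - Polynomial.C (xs k))) :
    ∀ k : Fin (n + 1),
      (∑ j ∈ Finset.univ.erase k, 2 / (xs j - xs k))
        - 1 / (xs k - z) - 1 / xs k
        + 1 / (xs k - (-(b (n + 1)) + (2 * (n : ℝ) + α + z + 3)))
        + 1 - α / xs k = 0 := by
  intro k
  let S : Sequence ℝ := ⟨P, fun m => by
    simpa only [hP_deg] using degree_eq_natDegree (hP_monic m).ne_zero⟩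
  have hS : IsMonicOrthogonal (truncatedLaguerre hα z) S :=
    isMonicOrthogonal_truncatedLaguerre hα hz hP_monic hP_orth
  have hxk : xs k ≠ 0 := (hx_mem k).1.ne'
  have hxz : xs k ≠ z := (hx_mem k).2.ne
  have hσ : (laguerreSigma z).eval (xs k) ≠ 0 := by
    simp [laguerreSigma, hxk, sub_ne_zero.mpr hxz]
  rw [hS.electrostatic_equilibrium (satisfiesPearson_truncatedLaguerre hα hz.le)
    (natDegree_laguerreSigma_le z) (natDegree_laguerreTau_le α z) (hrec (n + 1) n.succ_pos)
    hx_zeros hx_mono.injective.injOn (Finset.mem_univ k) hσ,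
    laguerreTau_div_laguerreSigma hxk hxz, coeff_two_laguerreTau, eval_structureFactor_laguerre,
    neg_div_neg_eq]
  ring
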